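/- For every n ≥ 1, the polynomial R_n^B(x) has −1 as a zero of multiplicity exactly ⌊(n−1)/2⌋, and for every n ≥ 3 the polynomial R_n^D(x) has −1 as a zero of multiplicity exactly ⌊(n−1)/2⌋. -/

import Mathlib

open Finset Polynomial

/-- The word `π_1 π_2 ⋯ π_n` of a permutation of `[n] = {1,…,n}`, as a function `ℕ → ℤ`,
with the convention that positions outside `{1,…,n}` (in particular position `0`) get value `0`. -/
def permWord (n : ℕ) (σ : Equiv.Perm (Fin n)) : ℕ → ℤ := fun i =>
  if h : 1 ≤ i ∧ i ≤ n then ((σ ⟨i - 1, by omega⟩ : ℕ) : ℤ) + 1 else 0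

/-- A word changes direction at index `i`. -/
def changesDir (w : ℕ → ℤ) (i : ℕ) : Prop :=
  (w (i - 1) < w i ∧ w (i + 1) < w i) ∨ (w i < w (i - 1) ∧ w i < w (i + 1))

instance (w : ℕ → ℤ) : DecidablePred (changesDir w) := fun i => by
  unfold changesDir; infer_instance

/-- The number of alternating runs of a permutation of `[n]`:
one plus the number of indices `i ∈ {2,…,n-1}` where the word changes direction. -/
def runA (n : ℕ) (σ : Equiv.Perm (Fin n)) : ℕ :=
  1 + ((Finset.Icc 2 (n - 1)).filter (changesDir (permWord n σ))).card

/-- The run polynomial `R_n(x) = ∑_{σ ∈ S_n} x^{run σ}`. -/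
noncomputable def runPoly (n : ℕ) : Polynomial ℤ :=
  ∑ σ : Equiv.Perm (Fin n), X ^ runA n σ

/-- `altChain w b l` holds if the values of `w` along the index list `l` alternate,
starting with a strict descent if `b = true` (resp. ascent if `b = false`). -/
def altChain (w : ℕ → ℤ) : Bool → List ℕ → Prop
  | _, [] => True
  | _, [_] => True
  | b, i :: j :: rest => (if b then w j < w i else w i < w j) ∧ altChain w (!b) (j :: rest)

/-- `las n σ` : the maximum length of an alternating subsequence
`σ_{i₁} > σ_{i₂} < σ_{i₃} > ⋯` (indices strictly increasing) of `σ`. -/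
noncomputable def las (n : ℕ) (σ : Equiv.Perm (Fin n)) : ℕ :=
  sSup {k | ∃ l : List ℕ, l.length = k ∧ l.Chain' (· < ·) ∧
    (∀ i ∈ l, 1 ≤ i ∧ i ≤ n) ∧ altChain (permWord n σ) true l}

/-- The set of peaks of a permutation: indices `i ∈ {2,…,n-1}` with `σ_{i-1} < σ_i > σ_{i+1}`. -/
def peakSet (n : ℕ) (σ : Equiv.Perm (Fin n)) : Finset ℕ :=
  (Finset.Icc 2 (n - 1)).filter fun i =>
    permWord n σ (i - 1) < permWord n σ i ∧ permWord n σ (i + 1) < permWord n σ i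

/-- The set of valleys of a permutation: indices `i ∈ {2,…,n-1}` with `σ_{i-1} > σ_i < σ_{i+1}`. -/
def valleySet (n : ℕ) (σ : Equiv.Perm (Fin n)) : Finset ℕ :=
  (Finset.Icc 2 (n - 1)).filter fun i =>
    permWord n σ i < permWord n σ (i - 1) ∧ permWord n σ i < permWord n σ (i + 1)

/-- The set of left peaks of a permutation: indices `i ∈ {1,…,n-1}` with
`σ_{i-1} < σ_i > σ_{i+1}`, with the convention `σ_0 = 0`. -/
def leftPeakSet (n : ℕ) (σ : Equiv.Perm (Fin n)) : Finset ℕ :=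
  (Finset.Icc 1 (n - 1)).filter fun i =>
    permWord n σ (i - 1) < permWord n σ i ∧ permWord n σ (i + 1) < permWord n σ i

/-- The number of descents of a permutation of `[n]`. -/
def desA (n : ℕ) (σ : Equiv.Perm (Fin n)) : ℕ :=
  ((Finset.Icc 1 (n - 1)).filter fun i => permWord n σ (i + 1) < permWord n σ i).card

/-- The maximum letter (as a natural number, `0` for the empty word) of `w₂`, the longest
suffix of `w_1 ⋯ w_{i-1}` all of whose letters exceed `w i`. -/
def w2Max (w : ℕ → ℤ) (i : ℕ) : ℕ :=
  ((Finset.Ico 1 i).filter fun j => ∀ t ∈ Finset.Ico j i, w i < w t).sup fun j => (w j).toNat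

/-- The maximum letter (as a natural number, `0` for the empty word) of `w₄`, the longest
prefix of `w_{i+1} ⋯ w_n` all of whose letters exceed `w i`. -/
def w4Max (n : ℕ) (w : ℕ → ℤ) (i : ℕ) : ℕ :=
  ((Finset.Ioc i n).filter fun j => ∀ t ∈ Finset.Ioc i j, w i < w t).sup fun j => (w j).toNat

/-- André permutation of `[n]`: no double descent, no final descent, and for every
`i ∈ {2,…,n-1}`, in the `π_i`-factorization the maximum letter of `w₂` is smaller than the
maximum letter of `w₄` (maximum of the empty word being `0`). -/
def IsAndre (n : ℕ) (σ : Equiv.Perm (Fin n)) : Prop :=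
  (∀ i ∈ Finset.Icc 2 (n - 1),
      ¬(permWord n σ i < permWord n σ (i - 1) ∧ permWord n σ (i + 1) < permWord n σ i)) ∧
  permWord n σ (n - 1) < permWord n σ n ∧
  ∀ i ∈ Finset.Icc 2 (n - 1), w2Max (permWord n σ) i < w4Max n (permWord n σ) i

/-- `d_{n,i}` : the number of André permutations of `[n]` with exactly `i` descents. -/
noncomputable def andreCount (n i : ℕ) : ℕ :=
  Nat.card {σ : Equiv.Perm (Fin n) // IsAndre n σ ∧ desA n σ = i}

/-- A signed permutation of length `n`: a permutation of `[n]` together with a sign for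
each position. -/
abbrev SignedPerm (n : ℕ) := Equiv.Perm (Fin n) × (Fin n → Bool)

/-- The word `π_1 π_2 ⋯ π_n` of a signed permutation, as a function `ℕ → ℤ`, with the
convention that positions outside `{1,…,n}` (in particular position `0`) get value `0`. -/
def signedWord (n : ℕ) (π : SignedPerm n) : ℕ → ℤ := fun i =>
  if h : 1 ≤ i ∧ i ≤ n then
    (if π.2 ⟨i - 1, by omega⟩ then -(((π.1 ⟨i - 1, by omega⟩ : ℕ) : ℤ) + 1)
      else ((π.1 ⟨i - 1, by omega⟩ : ℕ) : ℤ) + 1)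
  else 0

/-- `run_B` : one plus the number of indices `i ∈ {1,…,n-1}` where the word
`0 π_1 ⋯ π_n` changes direction. -/
def runB (n : ℕ) (π : SignedPerm n) : ℕ :=
  1 + ((Finset.Icc 1 (n - 1)).filter (changesDir (signedWord n π))).card

/-- `des_B` : the number of indices `i ∈ {0,…,n-1}` with `π_i > π_{i+1}`, where `π_0 = 0`. -/
def desB (n : ℕ) (π : SignedPerm n) : ℕ :=
  ((Finset.range n).filter fun i => signedWord n π (i + 1) < signedWord n π i).card

/-- The set of valleys of a signed permutation: indices `i ∈ {1,…,n-1}` with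
`π_{i-1} > π_i < π_{i+1}`, with the convention `π_0 = 0`. -/
def valleysB (n : ℕ) (π : SignedPerm n) : Finset ℕ :=
  (Finset.Icc 1 (n - 1)).filter fun i =>
    signedWord n π i < signedWord n π (i - 1) ∧ signedWord n π i < signedWord n π (i + 1)

/-- The maximum letter of `w₂` (as an element of `WithBot ℤ`, empty word giving `⊥ = -∞`). -/
def w2MaxB (w : ℕ → ℤ) (i : ℕ) : WithBot ℤ :=
  ((Finset.Ico 1 i).filter fun j => ∀ t ∈ Finset.Ico j i, w i < w t).sup fun j =>
    (w j : WithBot ℤ)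

/-- The maximum letter of `w₄` (as an element of `WithBot ℤ`, empty word giving `⊥ = -∞`). -/
def w4MaxB (n : ℕ) (w : ℕ → ℤ) (i : ℕ) : WithBot ℤ :=
  ((Finset.Ioc i n).filter fun j => ∀ t ∈ Finset.Ioc i j, w i < w t).sup fun j =>
    (w j : WithBot ℤ)

/-- Type B André permutation: no double descent, no final descent, and for every valley `i`,
in the `π_i`-factorization the maximum letter of `w₂` is smaller than the maximum letter of
`w₄` (maximum of the empty word being `-∞`). -/
def IsAndreB (n : ℕ) (π : SignedPerm n) : Prop :=
  (∀ i ∈ Finset.Icc 1 (n - 1),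
      ¬(signedWord n π i < signedWord n π (i - 1) ∧ signedWord n π (i + 1) < signedWord n π i)) ∧
  signedWord n π (n - 1) < signedWord n π n ∧
  ∀ i ∈ valleysB n π, w2MaxB (signedWord n π) i < w4MaxB n (signedWord n π) i

/-- The number of negative letters of a signed permutation. -/
def negCount (n : ℕ) (π : SignedPerm n) : ℕ :=
  (Finset.univ.filter fun i => π.2 i = true).card

/-- `R_n^{B,>}(x)`. -/
noncomputable def runPolyBgt (n : ℕ) : Polynomial ℤ :=
  ∑ π : SignedPerm n, if 0 < signedWord n π 1 then X ^ runB n π else 0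

/-- `R_n^{B,<}(x)`. -/
noncomputable def runPolyBlt (n : ℕ) : Polynomial ℤ :=
  ∑ π : SignedPerm n, if signedWord n π 1 < 0 then X ^ runB n π else 0

/-- `R_n^{B}(x)`. -/
noncomputable def runPolyB (n : ℕ) : Polynomial ℤ :=
  ∑ π : SignedPerm n, X ^ runB n π

/-- `R_n^{D,>}(x)`. -/
noncomputable def runPolyDgt (n : ℕ) : Polynomial ℤ :=
  ∑ π : SignedPerm n, if Even (negCount n π) ∧ 0 < signedWord n π 1 then X ^ runB n π else 0

/-- `R_n^{D,<}(x)`. -/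
noncomputable def runPolyDlt (n : ℕ) : Polynomial ℤ :=
  ∑ π : SignedPerm n, if Even (negCount n π) ∧ signedWord n π 1 < 0 then X ^ runB n π else 0

/-- `R_n^{D}(x)`. -/
noncomputable def runPolyD (n : ℕ) : Polynomial ℤ :=
  ∑ π : SignedPerm n, if Even (negCount n π) then X ^ runB n π else 0

/-- The Eulerian polynomial `A_n(x) = ∑_{σ ∈ S_n} x^{des(σ)+1}`. -/
noncomputable def eulerianA (n : ℕ) : Polynomial ℤ :=
  ∑ σ : Equiv.Perm (Fin n), X ^ (desA n σ + 1)

/-- The type B Eulerian polynomial `B_n(x) = ∑_{π ∈ 𝔅_n} x^{des_B(π)}`. -/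
noncomputable def eulerianB (n : ℕ) : Polynomial ℤ :=
  ∑ π : SignedPerm n, X ^ desB n π

/-- `b̄_{n,k}` : the number of type B André permutations of length `n` with `des_B` equal
to `k`. -/
noncomputable def andreBCountDes (n k : ℕ) : ℕ :=
  Nat.card {π : SignedPerm n // IsAndreB n π ∧ desB n π = k}

/-- `b̂_{n,j}` : the number of type B André permutations of length `n` with exactly `j`
valleys. -/
noncomputable def andreBCountVal (n j : ℕ) : ℕ :=
  Nat.card {π : SignedPerm n // IsAndreB n π ∧ (valleysB n π).card = j}

/-- `d̃_{n,k}` : the number of type D André permutations of length `n` (type B André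
permutations with an even number of negative letters) with exactly `k` valleys. -/
noncomputable def andreDCountVal (n k : ℕ) : ℕ :=
  Nat.card {π : SignedPerm n //
    IsAndreB n π ∧ Even (negCount n π) ∧ (valleysB n π).card = k}

/-- The number of permutations of `[n]` with exactly `j` left peaks. -/
noncomputable def leftPeakCount (n j : ℕ) : ℕ :=
  Nat.card {σ : Equiv.Perm (Fin n) // (leftPeakSet n σ).card = j}

/-- `R_n` evaluated at a real number. -/
noncomputable def runPolyReal (n : ℕ) (x : ℝ) : ℝ :=
  ∑ σ : Equiv.Perm (Fin n), x ^ runA n σ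

/-- `A_n` evaluated at a real number. -/
noncomputable def eulerianAReal (n : ℕ) (x : ℝ) : ℝ :=
  ∑ σ : Equiv.Perm (Fin n), x ^ (desA n σ + 1)

/-- `R_n^{B,>}` evaluated at a real number. -/
noncomputable def runPolyBgtReal (n : ℕ) (x : ℝ) : ℝ :=
  ∑ π : SignedPerm n, if 0 < signedWord n π 1 then x ^ runB n π else 0

/-- `B_n` evaluated at a real number. -/
noncomputable def eulerianBReal (n : ℕ) (x : ℝ) : ℝ :=
  ∑ π : SignedPerm n, x ^ desB n π

/-! Inserting the letter `±(n + 1)` into a signed permutation replaces one letter of the up-down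
word of `0 π₁ ⋯ πₙ` by `UD` or `DU`, or appends `U` or `D`. Counting runs after all `2 (n + 1)`
insertions gives `R_{n+1}^B = (2 n X² + 3 X - 1) R_n^B + 2 X (1 - X²) d/dX R_n^B`. Consequently
`R_{n+1}^B = 2 X ∑ⱼ eⱼ (X - 1) ^ j (X + 1) ^ (n - j)` with `eⱼ > 0` for `2 j ≤ n + 1` and `eⱼ = 0`
otherwise, and the multiplicity of `-1` is read off the last nonzero term.

For type D one adds the sum weighted by `(-1) ^ neg`. The insertions that replace a letter then
cancel, and the weighted sum is an alternating sum over all up-down words, which equals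
`2 X (1 - X) (1 - X²) ^ k` for `n = 2 k + 2` and `0` for odd `n`. It only changes the last
coefficient `eⱼ`, by `±1`, and that coefficient is at least `3` for even `n ≥ 4`. -/

section DirectionWords

variable {α : Type*} [LinearOrder α] {R : Type*} [CommRing R]

/-- The up-down word of `w 0, …, w n`, of length `n`; `true` marks an ascent. -/
def directions : ℕ → (ℕ → α) → List Bool
  | 0, _ => []
  | n + 1, w => decide (w 0 < w 1) :: directions n fun i => w (i + 1)

@[simp]
lemma length_directions (n : ℕ) (w : ℕ → α) : (directions n w).length = n := by
  induction n generalizing w with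
  | zero => rfl
  | succ n ih => simp [directions, ih]

/-- The number of positions at which consecutive letters of an up-down word differ. -/
def directionChanges : List Bool → ℕ
  | c :: d :: w => (if c = d then 0 else 1) + directionChanges (d :: w)
  | _ => 0

lemma directionChanges_directions_succ (n : ℕ) (w : ℕ → ℤ) (hw : ∀ i ≤ n, w i ≠ w (i + 1)) :
    directionChanges (directions (n + 1) w) =
      ∑ i ∈ range n, if changesDir w (i + 1) then 1 else 0 := by
  induction n generalizing w with
  | zero => rfl
  | succ n ih =>
    have hshift := ih (fun i => w (i + 1)) fun i hi => hw (i + 1) (by omega)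
    have hfirst : changesDir w 1 ↔ decide (w 0 < w 1) ≠ decide (w 1 < w 2) := by
      have h₀ := hw 0 (by omega)
      have h₁ := hw 1 (by omega)
      simp only [changesDir, ne_eq, decide_eq_decide]
      grind
    calc directionChanges (directions (n + 2) w)
        = (if decide (w 0 < w 1) = decide (w 1 < w 2) then 0 else 1) +
            directionChanges (directions (n + 1) fun i => w (i + 1)) := rfl
      _ = _ := by
        rw [hshift, sum_range_succ', add_comm]
        simp only [zero_add, hfirst, ne_eq, ite_not]
        rfl

/-- The word obtained from `w` by inserting the letter `a` at position `p`. -/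
def insertLetter {β : Type*} (w : ℕ → β) (p : ℕ) (a : β) : ℕ → β := fun i =>
  if i < p then w i else if i = p then a else w (i - 1)

/-- The effect on an up-down word of inserting an extreme letter after position `p`: a new minimum
if `s` and a new maximum otherwise. -/
def insertExtremum (s : Bool) : List Bool → ℕ → List Bool
  | [], _ => [!s]
  | _ :: w, 0 => (!s) :: s :: w
  | d :: w, p + 1 => d :: insertExtremum s w p

lemma directions_insertLetter (s : Bool) (a : α) (n p : ℕ) (hp : p ≤ n) (w : ℕ → α)
    (hmax : ∀ i, decide (w i < a) = !s) (hmin : ∀ i, decide (a < w i) = s) :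
    directions (n + 1) (insertLetter w (p + 1) a) = insertExtremum s (directions n w) p := by
  induction n generalizing p w with
  | zero =>
    obtain rfl : p = 0 := by omega
    simp [directions, insertExtremum, insertLetter, hmax]
  | succ n ih =>
    cases p with
    | zero => simp [directions, insertExtremum, insertLetter, hmax, hmin]
    | succ p =>
      have hshift : (fun i => insertLetter w (p + 2) a (i + 1)) =
          insertLetter (fun i => w (i + 1)) (p + 1) a := by
        funext i
        grind [insertLetter]
      rw [directions, hshift, ih p (by omega) _ (fun i => hmax _) fun i => hmin _]
      simp [directions, insertExtremum, insertLetter]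

/-- The sum of `F` over all insertions of an extreme letter into an up-down word, where a new
minimum has weight `ε` and a new maximum weight `1`. -/
def insertionSum (ε : R) (F : List Bool → R) (w : List Bool) : R :=
  ∑ p ∈ range (w.length + 1), (F (insertExtremum false w p) + ε * F (insertExtremum true w p))

lemma insertionSum_nil (ε : R) (F : List Bool → R) :
    insertionSum ε F [] = F [true] + ε * F [false] := by
  simp [insertionSum, insertExtremum]

lemma insertionSum_cons (ε : R) (F : List Bool → R) (d : Bool) (w : List Bool) :
    insertionSum ε F (d :: w) =
      F (true :: false :: w) + ε * F (false :: true :: w) +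
        insertionSum ε (fun v => F (d :: v)) w := by
  rw [insertionSum, List.length_cons, sum_range_succ', add_comm]
  simp [insertionSum, insertExtremum]

lemma insertionSum_const_mul (ε a : R) (F : List Bool → R) (w : List Bool) :
    insertionSum ε (fun v => a * F v) w = a * insertionSum ε F w := by
  simp only [insertionSum, mul_sum]
  exact sum_congr rfl fun p _ => by ring

/-- The sum `∑ (-1) ^ #D(w) F(w)` over all up-down words `w` of length `n`, where `#D(w)` is the
number of descents. -/
def alternatingSum : ℕ → (List Bool → R) → R
  | 0, F => F []
  | n + 1, F => alternatingSum n fun w => F (true :: w) - F (false :: w)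

lemma alternatingSum_const_mul (n : ℕ) (a : R) (F : List Bool → R) :
    alternatingSum n (fun w => a * F w) = a * alternatingSum n F := by
  induction n generalizing F with
  | zero => rfl
  | succ n ih => simp only [alternatingSum, ← mul_sub, ih]

-- Replacing the first letter by `UD` or `DU` forgets it, so its two values cancel.
lemma alternatingSum_insertionSum (n : ℕ) (F : List Bool → R) :
    alternatingSum n (insertionSum (-1) F) = alternatingSum (n + 1) F := by
  induction n generalizing F with
  | zero => simp [alternatingSum, insertionSum_nil, sub_eq_add_neg]
  | succ n ih =>
    rw [alternatingSum, alternatingSum, ← ih]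
    congr 1
    funext w
    rw [insertionSum_cons, insertionSum_cons, add_sub_add_left_eq_sub]
    simp only [insertionSum, ← sum_sub_distrib]
    exact sum_congr rfl fun p _ => by ring

lemma alternatingSum_pow_directionChanges_add_three (x : R) (n : ℕ) :
    alternatingSum (n + 3) (fun w => x ^ directionChanges w) =
      (1 - x ^ 2) * alternatingSum (n + 1) fun w => x ^ directionChanges w := by
  rw [← alternatingSum_const_mul]
  simp only [alternatingSum]
  congr 1
  funext w
  simp only [directionChanges, ↓reduceIte, Bool.true_eq_false, Bool.false_eq_true, pow_add,
    pow_zero, pow_one]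
  ring

lemma alternatingSum_pow_directionChanges_odd (x : R) (k : ℕ) :
    alternatingSum (2 * k + 1) (fun w => x ^ directionChanges w) = 0 := by
  induction k with
  | zero => simp [alternatingSum, directionChanges]
  | succ k ih =>
    rw [mul_add_one, add_right_comm, alternatingSum_pow_directionChanges_add_three, ih, mul_zero]

lemma alternatingSum_pow_directionChanges_even (x : R) (k : ℕ) :
    alternatingSum (2 * k + 2) (fun w => x ^ directionChanges w) =
      2 * (1 - x) * (1 - x ^ 2) ^ k := by
  induction k with
  | zero =>
    simp only [alternatingSum, directionChanges, ↓reduceIte, Bool.true_eq_false,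
      Bool.false_eq_true]
    ring
  | succ k ih =>
    rw [mul_add_one, add_right_comm, alternatingSum_pow_directionChanges_add_three, ih]
    ring

end DirectionWords

section RunRecurrence

/-- The operator `P ↦ (2 n X² + 3 X - 1) P + 2 X (1 - X²) P'`, which turns the run polynomial of
signed permutations of length `n` into that of length `n + 1`. -/
noncomputable def insertionOperator (n : ℕ) : ℤ[X] →ₗ[ℤ] ℤ[X] :=
  LinearMap.mulLeft ℤ (2 * (n : ℤ[X]) * X ^ 2 + 3 * X - 1) +
    LinearMap.mulLeft ℤ (2 * X * (1 - X ^ 2)) ∘ₗ derivative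

lemma insertionOperator_apply (n : ℕ) (P : ℤ[X]) :
    insertionOperator n P =
      (2 * (n : ℤ[X]) * X ^ 2 + 3 * X - 1) * P + 2 * X * (1 - X ^ 2) * derivative P :=
  rfl

lemma insertionOperator_succ (n : ℕ) (P : ℤ[X]) :
    insertionOperator (n + 1) P = insertionOperator n P + 2 * X ^ 2 * P := by
  simp only [insertionOperator_apply, Nat.cast_succ]
  ring

lemma insertionOperator_succ_X_mul (n : ℕ) (P : ℤ[X]) :
    insertionOperator (n + 1) (X * P) = X * insertionOperator n P + 2 * X * P := by
  simp only [insertionOperator_apply, Nat.cast_succ, derivative_mul, derivative_X]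
  ring

/-- The monomial `X ^ r`, where `r` is the number of runs of an up-down word. -/
noncomputable def runMonomial (w : List Bool) : ℤ[X] := X ^ (directionChanges w + 1)

lemma runMonomial_cons_cons (c d : Bool) (w : List Bool) :
    runMonomial (c :: d :: w) = (if c = d then 1 else X) * runMonomial (d :: w) := by
  cases c <;> cases d <;> simp [runMonomial, directionChanges, pow_add, mul_comm]

lemma insertionSum_runMonomial_singleton (c : Bool) :
    insertionSum 1 runMonomial [c] = insertionOperator 1 (runMonomial [c]) := by
  cases c <;>
  simp only [insertionSum_cons, insertionSum_nil, runMonomial, directionChanges, ↓reduceIte,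
    Bool.true_eq_false, Bool.false_eq_true, zero_add, pow_one, insertionOperator_apply,
    Nat.cast_one, derivative_X] <;> ring

lemma insertionSum_runMonomial_cons_cons (c d : Bool) (w : List Bool) :
    insertionSum 1 runMonomial (c :: d :: w) =
      (if c = d then 1 else X) * insertionSum 1 runMonomial (d :: w) +
        2 * (if c = d then X ^ 2 else X) * runMonomial (d :: w) := by
  simp only [insertionSum_cons, runMonomial_cons_cons, insertionSum_const_mul]
  cases c <;> cases d <;> simp only [↓reduceIte, Bool.true_eq_false, Bool.false_eq_true] <;> ring

lemma insertionSum_runMonomial (d : Bool) (w : List Bool) :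
    insertionSum 1 runMonomial (d :: w) =
      insertionOperator (w.length + 1) (runMonomial (d :: w)) := by
  induction w generalizing d with
  | nil => exact insertionSum_runMonomial_singleton d
  | cons e w ih =>
    rw [insertionSum_runMonomial_cons_cons, ih]
    by_cases h : d = e
    · simp only [runMonomial_cons_cons, h, if_true, one_mul, List.length_cons,
        insertionOperator_succ]
    · simp only [runMonomial_cons_cons, h, if_false, List.length_cons,
        insertionOperator_succ_X_mul]

end RunRecurrence

section SignedPermutations

/-- The permutation of `Fin (n + 1)` obtained from the word of `σ` by inserting the letter `n` at
position `p`. -/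
def insertLast {n : ℕ} (σ : Equiv.Perm (Fin n)) (p : Fin (n + 1)) : Equiv.Perm (Fin (n + 1)) :=
  (finSuccEquiv' p).trans ((Equiv.optionCongr σ).trans (finSuccEquiv' (Fin.last n)).symm)

@[simp]
lemma insertLast_self {n : ℕ} (σ : Equiv.Perm (Fin n)) (p : Fin (n + 1)) :
    insertLast σ p p = Fin.last n := by
  simp [insertLast]

@[simp]
lemma insertLast_succAbove {n : ℕ} (σ : Equiv.Perm (Fin n)) (p : Fin (n + 1)) (i : Fin n) :
    insertLast σ p (p.succAbove i) = (σ i).castSucc := by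
  simp [insertLast]

lemma insertLast_inj {n : ℕ} {σ τ : Equiv.Perm (Fin n)} {p q : Fin (n + 1)} :
    insertLast σ p = insertLast τ q ↔ σ = τ ∧ p = q := by
  refine ⟨fun h => ?_, fun ⟨hσ, hp⟩ => by rw [hσ, hp]⟩
  obtain rfl : p = q := (insertLast τ q).injective <| by
    rw [← h, insertLast_self, h, insertLast_self]
  refine ⟨Equiv.ext fun i => ?_, rfl⟩
  simpa using Equiv.congr_fun h (p.succAbove i)

/-- The signed permutation of length `n + 1` obtained from `π` by inserting the letter `-(n + 1)`
if `s`, and `n + 1` otherwise, after the first `p` letters. -/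
def insertSigned {n : ℕ} (π : SignedPerm n) (p : Fin (n + 1)) (s : Bool) : SignedPerm (n + 1) :=
  (insertLast π.1 p, p.insertNth (α := fun _ => Bool) s π.2)

lemma insertSigned_bijective (n : ℕ) :
    Function.Bijective fun x : SignedPerm n × Fin (n + 1) × Bool =>
      insertSigned x.1 x.2.1 x.2.2 := by
  rw [Fintype.bijective_iff_injective_and_card]
  constructor
  · rintro ⟨⟨σ, u⟩, p, s⟩ ⟨⟨τ, v⟩, q, t⟩ h
    obtain ⟨hperm, hsign⟩ := Prod.mk.inj h
    obtain ⟨rfl, rfl⟩ := insertLast_inj.1 hperm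
    obtain ⟨rfl, rfl⟩ := Fin.insertNth_inj.1 hsign
    rfl
  · simp only [Fintype.card_prod, Fintype.card_perm, Fintype.card_fin, Fintype.card_pi,
      Fintype.card_bool, prod_const, card_univ, Nat.factorial_succ, pow_succ]
    ring

lemma negCount_insertSigned {n : ℕ} (π : SignedPerm n) (p : Fin (n + 1)) (s : Bool) :
    negCount (n + 1) (insertSigned π p s) = negCount n π + s.toNat := by
  simp only [negCount, card_filter]
  rw [Fin.sum_univ_succAbove _ p]
  cases s <;> simp [insertSigned, add_comm]

lemma abs_signedWord_le {n : ℕ} (π : SignedPerm n) (i : ℕ) : |signedWord n π i| ≤ n := by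
  unfold signedWord
  split_ifs with h
  · rw [abs_neg]
    grind
  · grind
  · simp

@[simp]
lemma signedWord_zero {n : ℕ} (π : SignedPerm n) : signedWord n π 0 = 0 := by
  simp [signedWord]

lemma signedWord_of_lt {n i : ℕ} (π : SignedPerm n) (hi : n < i) : signedWord n π i = 0 :=
  dif_neg (by omega)

lemma signedWord_val_succ {n : ℕ} (π : SignedPerm n) (i : Fin n) :
    signedWord n π (i + 1) = if π.2 i then -((π.1 i : ℤ) + 1) else (π.1 i : ℤ) + 1 := by
  simp [signedWord]

lemma signedWord_ne_signedWord_succ {n i : ℕ} (π : SignedPerm n) (hi : i < n) :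
    signedWord n π i ≠ signedWord n π (i + 1) := by
  have hsucc := signedWord_val_succ π ⟨i, hi⟩
  cases i with
  | zero =>
    dsimp only at hsucc
    rw [hsucc, signedWord_zero]
    split_ifs <;> omega
  | succ i =>
    have hpred := signedWord_val_succ π ⟨i, by omega⟩
    have hdistinct : (π.1 ⟨i, by omega⟩ : ℕ) ≠ π.1 ⟨i + 1, hi⟩ := by
      simp [Fin.val_inj]
    dsimp only at hsucc hpred
    rw [hsucc, hpred]
    split_ifs <;> omega

lemma signedWord_insertSigned {n : ℕ} (π : SignedPerm n) (p : Fin (n + 1)) (s : Bool) :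
    signedWord (n + 1) (insertSigned π p s) =
      insertLetter (signedWord n π) (p + 1) (if s then -((n : ℤ) + 1) else (n : ℤ) + 1) := by
  funext i
  rcases lt_or_ge (n + 1) i with hi | hi
  · rw [signedWord_of_lt _ hi, insertLetter, if_neg (by omega), if_neg (by omega),
      signedWord_of_lt _ (by omega)]
  cases i with
  | zero => simp [insertLetter]
  | succ i =>
    obtain ⟨k, rfl⟩ : ∃ k : Fin (n + 1), i = k := ⟨⟨i, by omega⟩, rfl⟩
    rw [signedWord_val_succ]
    induction k using p.succAboveCases with
    | x => simp [insertSigned, insertLetter]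
    | p j =>
      have hletter : insertLetter (signedWord n π) (p + 1)
          (if s then -((n : ℤ) + 1) else (n : ℤ) + 1) (p.succAbove j + 1) =
            signedWord n π (j + 1) := by
        rcases Fin.lt_or_ge j.castSucc p with hj | hj
        · rw [Fin.succAbove_of_castSucc_lt _ _ hj]
          grind [insertLetter]
        · rw [Fin.succAbove_of_le_castSucc _ _ hj]
          grind [insertLetter]
      rw [hletter, signedWord_val_succ]
      simp [insertSigned]

lemma directions_insertSigned {n : ℕ} (π : SignedPerm n) (p : Fin (n + 1)) (s : Bool) :
    directions (n + 1) (signedWord (n + 1) (insertSigned π p s)) =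
      insertExtremum s (directions n (signedWord n π)) p := by
  have hbound i := abs_le.1 (abs_signedWord_le π i)
  rw [signedWord_insertSigned]
  refine directions_insertLetter s _ n p (by omega) _ (fun i => ?_) fun i => ?_ <;>
    cases s <;> grind

lemma runB_eq_directionChanges_add_one (n : ℕ) (π : SignedPerm n) :
    runB n π = directionChanges (directions n (signedWord n π)) + 1 := by
  cases n with
  | zero => rfl
  | succ n =>
    rw [directionChanges_directions_succ n (signedWord (n + 1) π) fun i hi =>
      signedWord_ne_signedWord_succ π (by omega), runB, card_filter, add_comm]
    congr 1
    rw [range_eq_Ico, sum_Ico_add' (fun i => if changesDir (signedWord (n + 1) π) i then 1 else 0)]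
    rfl

lemma sum_signedPerm_succ {R : Type*} [CommRing R] (ε : R) (n : ℕ) (F : List Bool → R) :
    ∑ π : SignedPerm (n + 1), ε ^ negCount (n + 1) π * F (directions (n + 1) (signedWord _ π)) =
      ∑ π : SignedPerm n, ε ^ negCount n π * insertionSum ε F (directions n (signedWord n π)) := by
  rw [← (insertSigned_bijective n).sum_comp, Fintype.sum_prod_type]
  refine sum_congr rfl fun π _ => ?_
  simp only [insertionSum, Fintype.sum_prod_type, Fintype.sum_bool, directions_insertSigned,
    negCount_insertSigned, length_directions, mul_sum, sum_range]
  refine sum_congr rfl fun p _ => ?_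
  simp only [Bool.toNat_true, Bool.toNat_false, pow_succ, add_zero]
  ring

end SignedPermutations

section BinaryForms

/-- The binary form `∑ c j * a ^ j * b ^ (n - j)` of degree `n`, evaluated at `a = X - 1` and
`b = X + 1`. -/
noncomputable def binaryForm (n : ℕ) (c : ℕ → ℤ) : ℤ[X] :=
  ∑ p ∈ antidiagonal n, C (c p.1) * ((X - 1) ^ p.1 * (X + 1) ^ p.2)

lemma binaryForm_add (n : ℕ) (c d : ℕ → ℤ) :
    binaryForm n (fun j => c j + d j) = binaryForm n c + binaryForm n d := by
  simp only [binaryForm, C_add, add_mul, sum_add_distrib]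

lemma binaryForm_succ_of_top_eq_zero {n : ℕ} {c : ℕ → ℤ} (hc : c (n + 1) = 0) :
    binaryForm (n + 1) c = (X + 1) * binaryForm n c := by
  rw [binaryForm, Finset.Nat.sum_antidiagonal_succ', binaryForm, mul_sum, hc, C_0, zero_mul,
    zero_add]
  exact sum_congr rfl fun p _ => by ring

lemma binaryForm_succ_of_zero_eq_zero {n : ℕ} {c : ℕ → ℤ} (hc : c 0 = 0) :
    binaryForm (n + 1) c = (X - 1) * binaryForm n fun j => c (j + 1) := by
  rw [binaryForm, Finset.Nat.sum_antidiagonal_succ, binaryForm, mul_sum, hc, C_0, zero_mul,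
    zero_add]
  exact sum_congr rfl fun p _ => by ring

lemma binaryForm_add_eq_pow_mul {k : ℕ} {c : ℕ → ℤ} (hc : ∀ j, k < j → c j = 0) (l : ℕ) :
    binaryForm (k + l) c = (X + 1) ^ l * binaryForm k c := by
  induction l with
  | zero => simp
  | succ l ih =>
    rw [← add_assoc, binaryForm_succ_of_top_eq_zero (hc _ (by omega)), ih, pow_succ']
    ring

lemma eval_neg_one_binaryForm (n : ℕ) (c : ℕ → ℤ) :
    (binaryForm n c).eval (-1) = c n * (-2) ^ n := by
  rw [binaryForm, eval_finsetSum, sum_eq_single (n, 0)]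
  · norm_num
  · rintro ⟨j, m⟩ hjm hne
    have hm : m ≠ 0 := by
      rintro rfl
      simp_all
    simp [hm]
  · simp

lemma exists_X_mul_binaryForm_eq {k : ℕ} {c : ℕ → ℤ} (hk : c k ≠ 0)
    (hc : ∀ j, k < j → c j = 0) (l : ℕ) :
    ∃ Q : ℤ[X], X * binaryForm (k + l) c = (1 + X) ^ l * Q ∧ Q.eval (-1) ≠ 0 := by
  refine ⟨X * binaryForm k c, ?_, ?_⟩
  · rw [binaryForm_add_eq_pow_mul hc]
    ring
  · simp [eval_neg_one_binaryForm, hk]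

lemma insertionOperator_X_mul_pow_mul_pow (j m : ℕ) :
    insertionOperator (j + m + 1) (X * ((X - 1) ^ j * (X + 1) ^ m)) =
      X * (((m : ℤ[X]) + 2 - (j : ℤ[X])) * ((X - 1) ^ j * (X + 1) ^ (m + 1)) +
        ((m : ℤ[X]) + 1 - (j : ℤ[X])) * ((X - 1) ^ (j + 1) * (X + 1) ^ m)) := by
  rw [insertionOperator_apply]
  cases j <;> cases m <;>
  simp only [derivative_mul, derivative_pow, derivative_sub, derivative_X, derivative_one,
    Nat.add_sub_cancel, Nat.cast_add, Nat.cast_one, Nat.cast_zero, map_add, map_natCast, C_1,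
    C_0] <;> ring

lemma insertionOperator_X_mul_binaryForm (n : ℕ) (c : ℕ → ℤ) :
    insertionOperator (n + 1) (X * binaryForm n c) =
      X * ((X + 1) * binaryForm n (fun j => (n + 2 - 2 * j) * c j) +
        (X - 1) * binaryForm n fun j => (n + 1 - 2 * j) * c j) := by
  simp only [binaryForm, mul_sum, map_sum, ← sum_add_distrib]
  refine sum_congr rfl fun ⟨j, m⟩ hjm => ?_
  obtain rfl := HasAntidiagonal.mem_antidiagonal.1 hjm
  rw [mul_left_comm, ← smul_eq_C_mul, map_smul, insertionOperator_X_mul_pow_mul_pow, smul_eq_C_mul]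
  simp only [C_mul, C_add, C_sub, C_1, C_ofNat, map_natCast, Nat.cast_add]
  ring

/-- The coefficients `eⱼ` in `R_{n+1}^B = 2 X ∑ⱼ eⱼ (X - 1) ^ j (X + 1) ^ (n - j)`. -/
def runCoeff : ℕ → ℕ → ℤ
  | 0, 0 => 1
  | 0, _ + 1 => 0
  | n + 1, 0 => (n + 2) * runCoeff n 0
  | n + 1, j + 1 => (n - 2 * j) * runCoeff n (j + 1) + (n + 1 - 2 * j) * runCoeff n j

lemma runCoeff_succ_succ (n j : ℕ) :
    runCoeff (n + 1) (j + 1) =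
      (n - 2 * j) * runCoeff n (j + 1) + (n + 1 - 2 * j) * runCoeff n j := rfl

lemma runCoeff_eq_zero {n j : ℕ} (h : n + 1 < 2 * j) : runCoeff n j = 0 := by
  induction n generalizing j with
  | zero =>
    obtain ⟨j, rfl⟩ := Nat.exists_eq_succ_of_ne_zero (show j ≠ 0 by omega)
    rfl
  | succ n ih =>
    obtain ⟨j, rfl⟩ := Nat.exists_eq_succ_of_ne_zero (show j ≠ 0 by omega)
    rw [runCoeff_succ_succ, ih (by omega), mul_zero, zero_add]
    rcases (show n + 1 ≤ 2 * j by omega).eq_or_lt with heq | hlt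
    · rw [show (n + 1 - 2 * j : ℤ) = 0 by omega, zero_mul]
    · rw [ih hlt, mul_zero]

lemma one_le_runCoeff {n j : ℕ} (h : 2 * j ≤ n + 1) : 1 ≤ runCoeff n j := by
  induction n generalizing j with
  | zero =>
    obtain rfl : j = 0 := by omega
    rfl
  | succ n ih =>
    cases j with
    | zero =>
      have hzero : 1 ≤ runCoeff n 0 := ih (by omega)
      rw [runCoeff]
      nlinarith
    | succ j =>
      have hlow : 1 ≤ runCoeff n j := ih (by omega)
      rw [runCoeff_succ_succ]
      rcases (show 2 * j ≤ n by omega).eq_or_lt with heq | hlt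
      · rw [show (n : ℤ) = 2 * j by omega]
        linarith
      · have htop : 1 ≤ runCoeff n (j + 1) := ih (by omega)
        have hpos : (1 : ℤ) ≤ n - 2 * j := by omega
        nlinarith [mul_le_mul hpos htop zero_le_one (by linarith)]

lemma three_le_runCoeff (k : ℕ) : 3 ≤ runCoeff (2 * k + 3) (k + 2) := by
  have hlow : 1 ≤ runCoeff (2 * k + 1) k := one_le_runCoeff (by omega)
  have htop : 1 ≤ runCoeff (2 * k + 1) (k + 1) := one_le_runCoeff (by omega)
  have hzero : runCoeff (2 * k + 2) (k + 2) = 0 := runCoeff_eq_zero (by omega)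
  have hrec : runCoeff (2 * k + 3) (k + 2) =
      runCoeff (2 * k + 1) (k + 1) + 2 * runCoeff (2 * k + 1) k := by
    rw [runCoeff_succ_succ, hzero, runCoeff_succ_succ]
    push_cast
    ring
  linarith

lemma binaryForm_succ_runCoeff_succ (n : ℕ) :
    binaryForm (n + 1) (runCoeff (n + 1)) =
      (X + 1) * binaryForm n (fun j => (n + 2 - 2 * j) * runCoeff n j) +
        (X - 1) * binaryForm n fun j => (n + 1 - 2 * j) * runCoeff n j := by
  let shifted : ℕ → ℤ
    | 0 => 0
    | j + 1 => (n + 1 - 2 * j) * runCoeff n j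
  have hsplit : runCoeff (n + 1) = fun j => (n + 2 - 2 * j) * runCoeff n j + shifted j := by
    funext j
    cases j with
    | zero => simp [runCoeff, shifted]
    | succ j =>
      rw [runCoeff_succ_succ]
      push_cast
      ring
  have htop : runCoeff n (n + 1) = 0 := runCoeff_eq_zero (by omega)
  rw [hsplit, binaryForm_add, binaryForm_succ_of_top_eq_zero (by rw [htop, mul_zero]),
    binaryForm_succ_of_zero_eq_zero (c := shifted) rfl]

end BinaryForms

section RunPolynomials

lemma runPolyB_eq_sum_runMonomial (n : ℕ) :
    runPolyB n = ∑ π, runMonomial (directions n (signedWord n π)) := by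
  simp only [runPolyB, runB_eq_directionChanges_add_one, runMonomial]

lemma runPolyB_succ_succ (n : ℕ) :
    runPolyB (n + 2) = insertionOperator (n + 1) (runPolyB (n + 1)) := by
  have hinsert := sum_signedPerm_succ 1 (n + 1) runMonomial
  simp only [one_pow, one_mul] at hinsert
  rw [runPolyB_eq_sum_runMonomial, runPolyB_eq_sum_runMonomial, hinsert, map_sum]
  refine sum_congr rfl fun π _ => ?_
  rw [directions, insertionSum_runMonomial, length_directions]

lemma runPolyB_one : runPolyB 1 = 2 * X := by
  simp [runPolyB, runB]

lemma sum_neg_one_pow_negCount_mul_eq_alternatingSum {R : Type*} [CommRing R] (n : ℕ)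
    (F : List Bool → R) :
    ∑ π : SignedPerm n, (-1) ^ negCount n π * F (directions n (signedWord n π)) =
      alternatingSum n F := by
  induction n generalizing F with
  | zero => simp [negCount, alternatingSum, directions]
  | succ n ih => rw [sum_signedPerm_succ, ih, alternatingSum_insertionSum]

lemma two_mul_runPolyD (n : ℕ) :
    2 * runPolyD n =
      runPolyB n + X * alternatingSum n fun w => (X : ℤ[X]) ^ directionChanges w := by
  rw [← sum_neg_one_pow_negCount_mul_eq_alternatingSum, runPolyD, runPolyB, mul_sum, mul_sum,
    ← sum_add_distrib]
  refine sum_congr rfl fun π _ => ?_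
  rw [runB_eq_directionChanges_add_one]
  split_ifs with h
  · rw [h.neg_one_pow]
    ring
  · rw [(Nat.not_even_iff_odd.1 h).neg_one_pow]
    ring

lemma runPolyB_succ (n : ℕ) : runPolyB (n + 1) = 2 * (X * binaryForm n (runCoeff n)) := by
  induction n with
  | zero => simp [runPolyB_one, binaryForm, runCoeff]
  | succ n ih =>
    rw [runPolyB_succ_succ, ih, two_mul, map_add, insertionOperator_X_mul_binaryForm,
      ← binaryForm_succ_runCoeff_succ, two_mul]

/-- The coefficients of the alternating sum over up-down words of length `n + 1` in terms of
`2 (X - 1) ^ j (X + 1) ^ (n - j)`. -/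
def alternatingCoeff (n j : ℕ) : ℤ := if 2 * j = n + 1 then (-1) ^ j else 0

lemma alternatingSum_pow_directionChanges_eq_binaryForm (n : ℕ) :
    alternatingSum (n + 1) (fun w => (X : ℤ[X]) ^ directionChanges w) =
      2 * binaryForm n (alternatingCoeff n) := by
  rcases n.even_or_odd' with ⟨k, rfl | rfl⟩
  · have hcoeff (j : ℕ) : alternatingCoeff (2 * k) j = 0 := if_neg (by omega)
    simp [alternatingSum_pow_directionChanges_odd, binaryForm, hcoeff]
  · have hcoeff : alternatingCoeff (2 * k + 1) (k + 1) = (-1) ^ (k + 1) := if_pos (by omega)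
    rw [alternatingSum_pow_directionChanges_even, binaryForm, sum_eq_single (k + 1, k)]
    · have hfactor : (1 - X ^ 2 : ℤ[X]) = -1 * (X - 1) * (X + 1) := by ring
      rw [hfactor, hcoeff, mul_pow, mul_pow]
      simp only [C_pow, C_neg, C_1]
      ring
    · rintro ⟨j, m⟩ hjm hne
      have hj : 2 * j ≠ 2 * k + 1 + 1 := by
        rw [HasAntidiagonal.mem_antidiagonal] at hjm
        grind
      simp [alternatingCoeff, hj]
    · intro hnot
      exact absurd (HasAntidiagonal.mem_antidiagonal.2 (by omega)) hnot

lemma runPolyD_succ (n : ℕ) :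
    runPolyD (n + 1) = X * binaryForm n fun j => runCoeff n j + alternatingCoeff n j := by
  refine mul_left_cancel₀ (two_ne_zero (α := ℤ[X])) ?_
  rw [two_mul_runPolyD, runPolyB_succ, alternatingSum_pow_directionChanges_eq_binaryForm,
    binaryForm_add]
  ring

lemma runCoeff_add_alternatingCoeff_pos {n : ℕ} (hn : 2 ≤ n) :
    0 < runCoeff n ((n + 1) / 2) + alternatingCoeff n ((n + 1) / 2) := by
  rcases n.even_or_odd' with ⟨k, rfl | rfl⟩
  · have hcoeff : 1 ≤ runCoeff (2 * k) ((2 * k + 1) / 2) := one_le_runCoeff (by omega)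
    rw [alternatingCoeff, if_neg (by omega)]
    linarith
  · obtain ⟨k, rfl⟩ := Nat.exists_eq_add_of_le' (show 1 ≤ k by omega)
    have hcoeff := three_le_runCoeff k
    have hsign : (-1 : ℤ) ≤ (-1) ^ (k + 2) := (abs_le.1 (abs_neg_one_pow _).le).1
    rw [show 2 * (k + 1) + 1 = 2 * k + 3 by ring, show (2 * k + 3 + 1) / 2 = k + 2 by omega,
      alternatingCoeff, if_pos (by ring)]
    linarith

end RunPolynomials

/-- For `n ≥ 1`, `−1` is a zero of `R_n^B(x)` of multiplicity exactly
`⌊(n−1)/2⌋`, and for `n ≥ 3`, `−1` is a zero of `R_n^D(x)` of multiplicity exactly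
`⌊(n−1)/2⌋`. -/
theorem statement12 (n : ℕ) (hn : 1 ≤ n) :
    (∃ Q : Polynomial ℤ, runPolyB n = (1 + X) ^ ((n - 1) / 2) * Q ∧ Q.eval (-1) ≠ 0) ∧
    (3 ≤ n →
      ∃ Q : Polynomial ℤ, runPolyD n = (1 + X) ^ ((n - 1) / 2) * Q ∧ Q.eval (-1) ≠ 0) := by
  obtain ⟨l, rfl⟩ := Nat.exists_eq_add_of_le' hn
  have hhalves : (l + 1) / 2 + l / 2 = l := by omega
  have hB_top : 0 < runCoeff l ((l + 1) / 2) := one_le_runCoeff (by omega)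
  have hB_zero (j : ℕ) (hj : (l + 1) / 2 < j) : runCoeff l j = 0 := runCoeff_eq_zero (by omega)
  have hD_zero (j : ℕ) (hj : (l + 1) / 2 < j) : runCoeff l j + alternatingCoeff l j = 0 := by
    rw [hB_zero j hj, alternatingCoeff, if_neg (by omega), add_zero]
  rw [Nat.add_sub_cancel]
  constructor
  · obtain ⟨Q, hQ, hQ_eval⟩ := exists_X_mul_binaryForm_eq hB_top.ne' hB_zero (l / 2)
    rw [hhalves] at hQ
    refine ⟨2 * Q, ?_, by simpa using hQ_eval⟩
    rw [runPolyB_succ, hQ, mul_left_comm]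
  · intro hl
    have hD_top := runCoeff_add_alternatingCoeff_pos (show 2 ≤ l by omega)
    have hD := exists_X_mul_binaryForm_eq hD_top.ne' hD_zero (l / 2)
    rwa [hhalves, ← runPolyD_succ] at hD
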